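/- arXiv:1711.11302 — 3 statements merged into one kernel-verified Lean document; each statement's English description precedes it below -/
import Mathlib

section
/- A real number λ is an eigenvalue of the periodic Anderson Hamiltonian H_per^(N) if and only if Tr(M̃_N(λ)) = 2, where M̃_N(λ) = T(λ − V_N)·T(λ − V_{N−1})···T(λ − V_1). Equivalently, λ is an eigenvalue of H_per^(N) if and only if 1 is an eigenvalue of the SL(2,ℝ) matrix M̃_N(λ). -/
/-- The transfer matrix `T(x)` with rows `(x, −1)` and `(1, 0)`. -/
def transferT (x : ℝ) : Matrix (Fin 2) (Fin 2) ℝ := !![x, -1; 1, 0]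

/-- The matrix product `M̃_n(λ) = T(λ − V_n) ⋯ T(λ − V_1)`. -/
noncomputable def transferMtilde (V : ℕ → ℝ) (l : ℝ) : ℕ → Matrix (Fin 2) (Fin 2) ℝ
  | 0 => 1
  | (n+1) => transferT (l - V (n+1)) * transferMtilde V l n

/-- The periodic Anderson Hamiltonian on `[1, N]`: diagonal `V_1, …, V_N`,
`1` on the two off-diagonals and at the corners `(1,N)`, `(N,1)`. -/
def andersonHper (N : ℕ) (V : ℕ → ℝ) : Matrix (Fin N) (Fin N) ℝ :=
  Matrix.of fun i j =>
    if (i : ℕ) = (j : ℕ) then V ((i : ℕ) + 1)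
    else if (i : ℕ) + 1 = (j : ℕ) ∨ (j : ℕ) + 1 = (i : ℕ) then 1
    else if ((i : ℕ) = 0 ∧ (j : ℕ) = N - 1) ∨ ((i : ℕ) = N - 1 ∧ (j : ℕ) = 0) then 1
    else 0

/-! An eigenvector of the periodic Hamiltonian is the same thing as a solution of the three-term
recurrence on `1, …, N` that closes up after `N` steps. Since `T (l - V n)` advances the pair
`(y n, y (n - 1))` by one site, the closing condition says that the initial pair is fixed by `M̃_N`.
Finally `det (M - 1) = 2 - tr M` when `M` is a `2 × 2` matrix of determinant `1`. -/

open Matrix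

section FixedVector

variable {R : Type*} [CommRing R]

theorem det_sub_one_fin_two (M : Matrix (Fin 2) (Fin 2) R) :
    (M - 1).det = M.det - M.trace + 1 := by
  simp only [det_fin_two, trace_fin_two, Matrix.sub_apply, one_fin_two, of_apply, cons_val',
    cons_val_zero, cons_val_one, cons_val_fin_one]
  ring

theorem exists_mulVec_eq_self_iff_trace_eq_two [IsDomain R] {M : Matrix (Fin 2) (Fin 2) R}
    (hM : M.det = 1) : (∃ z, z ≠ 0 ∧ M *ᵥ z = z) ↔ M.trace = 2 := by
  calc (∃ z, z ≠ 0 ∧ M *ᵥ z = z)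
      ↔ ∃ z, z ≠ 0 ∧ (M - 1) *ᵥ z = 0 := by simp only [sub_mulVec, one_mulVec, sub_eq_zero]
    _ ↔ (M - 1).det = 0 := exists_mulVec_eq_zero_iff
    _ ↔ M.trace = 2 := by
        rw [det_sub_one_fin_two, hM]
        constructor <;> intro h <;> linear_combination -h

end FixedVector

section CyclicIndexing

variable {α : Type*} {N : ℕ}

theorem val_finRotate (i : Fin N) :
    (finRotate N i : ℕ) = if (i : ℕ) + 1 = N then 0 else (i : ℕ) + 1 := by
  cases N with
  | zero => exact i.elim0
  | succ n => simp only [coe_finRotate, Fin.ext_iff, Fin.val_last, Nat.add_right_cancel_iff]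

theorem apply_val_finRotate {y : ℕ → α} (hy : y N = y 0) (i : Fin N) :
    y (finRotate N i) = y (i + 1) := by
  rw [val_finRotate]
  split_ifs with hi
  · rw [hi, hy]
  · rfl

theorem exists_periodic_apply_succ_eq [NeZero N] (x : Fin N → α) :
    ∃ y : ℕ → α, Function.Periodic y N ∧ ∀ i : Fin N, y (i + 1) = x i := by
  refine ⟨fun n => x (Fin.ofNat N (n + (N - 1))), fun n => ?_, fun i => ?_⟩
  · refine congrArg x (Fin.ext ?_)
    simp only [Fin.val_ofNat, Nat.add_right_comm n N, Nat.add_mod_right]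
  · have hN : (i : ℕ) + 1 + (N - 1) = i + N := by have := NeZero.pos N; omega
    refine congrArg x (Fin.ext ?_)
    simp only [Fin.val_ofNat, hN, Nat.add_mod_right, Nat.mod_eq_of_lt i.isLt]

end CyclicIndexing

/-- The eigenvalue equation `y (n + 1) + y (n - 1) + V n * y n = l * y n` of the Hamiltonian at the
sites `n = 1, …, N`, with the index shifted by one so that no subtraction occurs. -/
def IsAndersonSolution (N : ℕ) (V : ℕ → ℝ) (l : ℝ) (y : ℕ → ℝ) : Prop :=
  ∀ n < N, y (n + 2) + y n + V (n + 1) * y (n + 1) = l * y (n + 1)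

section Transfer

variable {N : ℕ} {V : ℕ → ℝ} {l : ℝ} {y : ℕ → ℝ}

theorem det_transferT (x : ℝ) : (transferT x).det = 1 := by
  simp [transferT, det_fin_two]

theorem det_transferMtilde (V : ℕ → ℝ) (l : ℝ) (n : ℕ) : (transferMtilde V l n).det = 1 := by
  induction n with
  | zero => simp [transferMtilde]
  | succ n ih => rw [transferMtilde, det_mul, det_transferT, ih, one_mul]

theorem transferT_mulVec (x : ℝ) (z : Fin 2 → ℝ) :
    transferT x *ᵥ z = ![x * z 0 - z 1, z 0] := by
  ext i
  fin_cases i <;> simp [transferT, mulVec, dotProduct, sub_eq_add_neg]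

theorem transferMtilde_succ_mulVec (V : ℕ → ℝ) (l : ℝ) (n : ℕ) (z : Fin 2 → ℝ) :
    transferMtilde V l (n + 1) *ᵥ z =
      ![(l - V (n + 1)) * (transferMtilde V l n *ᵥ z) 0 - (transferMtilde V l n *ᵥ z) 1,
        (transferMtilde V l n *ᵥ z) 0] := by
  rw [transferMtilde, ← mulVec_mulVec, transferT_mulVec]

theorem IsAndersonSolution.transferMtilde_mulVec (hy : IsAndersonSolution N V l y) {n : ℕ}
    (hn : n ≤ N) : transferMtilde V l n *ᵥ ![y 1, y 0] = ![y (n + 1), y n] := by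
  induction n with
  | zero => simp [transferMtilde]
  | succ n ih =>
    have hstep : (l - V (n + 1)) * y (n + 1) - y n = y (n + 2) := by
      linear_combination -hy n hn
    rw [transferMtilde_succ_mulVec, ih (Nat.le_of_succ_le hn)]
    simp only [cons_val_zero, cons_val_one, cons_val_fin_one, hstep]

theorem exists_isAndersonSolution (N : ℕ) (V : ℕ → ℝ) (l : ℝ) (z : Fin 2 → ℝ) :
    ∃ y, IsAndersonSolution N V l y ∧ ![y 1, y 0] = z := by
  refine ⟨fun n => (transferMtilde V l n *ᵥ z) 1, fun n _ => ?_, ?_⟩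
  · simp only [transferMtilde_succ_mulVec, cons_val_zero, cons_val_one]
    ring
  · have hzero : transferMtilde V l 0 *ᵥ z = z := one_mulVec z
    have hone : (transferMtilde V l 1 *ᵥ z) 1 = z 0 := by
      rw [transferMtilde_succ_mulVec, hzero, cons_val_one, cons_val_fin_one]
    simp only [hzero, hone]
    exact FinVec.etaExpand_eq z

theorem exists_periodic_isAndersonSolution_iff :
    (∃ y, IsAndersonSolution N V l y ∧ y N = y 0 ∧ y (N + 1) = y 1 ∧ ![y 1, y 0] ≠ 0) ↔
      ∃ z : Fin 2 → ℝ, z ≠ 0 ∧ transferMtilde V l N *ᵥ z = z := by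
  constructor
  · rintro ⟨y, hy, h₀, h₁, hne⟩
    exact ⟨![y 1, y 0], hne, by rw [hy.transferMtilde_mulVec le_rfl, h₀, h₁]⟩
  · rintro ⟨z, hne, hfix⟩
    obtain ⟨y, hy, rfl⟩ := exists_isAndersonSolution N V l z
    rw [hy.transferMtilde_mulVec le_rfl] at hfix
    exact ⟨y, hy, congrFun hfix 1, congrFun hfix 0, hne⟩

end Transfer

section Hamiltonian

variable {N : ℕ} {V : ℕ → ℝ} {l : ℝ} {y : ℕ → ℝ}

theorem andersonHper_eq_diagonal_add_permMatrix (hN : 3 ≤ N) (V : ℕ → ℝ) :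
    andersonHper N V = diagonal (fun i : Fin N => V (i + 1)) +
      (finRotate N).permMatrix ℝ + ((finRotate N).permMatrix ℝ)ᵀ := by
  ext i j
  have hi := i.isLt
  have hj := j.isLt
  simp only [andersonHper, of_apply, Matrix.add_apply, transpose_apply, diagonal_apply,
    Equiv.Perm.permMatrix, PEquiv.toMatrix_apply, Equiv.toPEquiv_apply, Option.mem_def,
    Option.some.injEq, Fin.ext_iff, val_finRotate]
  split_ifs <;> first | omega | simp

theorem andersonHper_mulVec_apply (hN : 3 ≤ N) (x : Fin N → ℝ) (i : Fin N) :
    (andersonHper N V *ᵥ x) i =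
      V (i + 1) * x i + x (finRotate N i) + x ((finRotate N).symm i) := by
  simp only [andersonHper_eq_diagonal_add_permMatrix hN, add_mulVec, transpose_permMatrix,
    permMatrix_mulVec, Pi.add_apply, mulVec_diagonal, Function.comp_apply, Equiv.Perm.inv_def]

theorem andersonHper_mulVec_eq_smul_iff (hN : 3 ≤ N) (h₀ : y N = y 0) (h₁ : y (N + 1) = y 1) :
    (andersonHper N V *ᵥ fun i : Fin N => y (i + 1)) = l • (fun i : Fin N => y (i + 1)) ↔
      IsAndersonSolution N V l y := by
  have hnext (i : Fin N) : y (finRotate N i + 1) = y (i + 2) :=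
    apply_val_finRotate (y := fun n => y (n + 1)) h₁ i
  have hprev (i : Fin N) : y ((finRotate N).symm i + 1) = y i := by
    rw [← apply_val_finRotate h₀, Equiv.apply_symm_apply]
  rw [IsAndersonSolution, funext_iff, Fin.forall_iff]
  refine forall₂_congr fun n hn => ?_
  rw [andersonHper_mulVec_apply hN, hnext, hprev, Pi.smul_apply, smul_eq_mul, add_rotate]

theorem IsAndersonSolution.restrict_eq_zero_iff [NeZero N] (hy : IsAndersonSolution N V l y)
    (h₀ : y N = y 0) : (fun i : Fin N => y (i + 1)) = 0 ↔ ![y 1, y 0] = 0 := by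
  constructor
  · intro hx
    have hx' (n : ℕ) (hn : n < N) : y (n + 1) = 0 := congrFun hx ⟨n, hn⟩
    have hN := NeZero.pos N
    have hlast := hx' (N - 1) (by omega)
    rw [Nat.sub_add_cancel hN, h₀] at hlast
    simp [hlast, hx' 0 hN]
  · intro hz
    ext i
    have hi := hy.transferMtilde_mulVec i.isLt.le
    rw [hz, mulVec_zero] at hi
    exact (congrFun hi 0).symm

theorem exists_andersonHper_eigenvector_iff (hN : 3 ≤ N) (V : ℕ → ℝ) (l : ℝ) :
    (∃ x : Fin N → ℝ, x ≠ 0 ∧ andersonHper N V *ᵥ x = l • x) ↔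
      ∃ y, IsAndersonSolution N V l y ∧ y N = y 0 ∧ y (N + 1) = y 1 ∧ ![y 1, y 0] ≠ 0 := by
  have : NeZero N := ⟨by omega⟩
  constructor
  · rintro ⟨x, hne, hx⟩
    obtain ⟨y, hper, hyx⟩ := exists_periodic_apply_succ_eq x
    obtain rfl : (fun i : Fin N => y (i + 1)) = x := funext hyx
    have h₁ : y (N + 1) = y 1 := by rw [add_comm, hper]
    have hy := (andersonHper_mulVec_eq_smul_iff hN hper.eq h₁).1 hx
    exact ⟨y, hy, hper.eq, h₁, mt (hy.restrict_eq_zero_iff hper.eq).2 hne⟩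
  · rintro ⟨y, hy, h₀, h₁, hne⟩
    exact ⟨fun i => y (i + 1), mt (hy.restrict_eq_zero_iff h₀).1 hne,
      (andersonHper_mulVec_eq_smul_iff hN h₀ h₁).2 hy⟩

end Hamiltonian

/-- `λ` is an eigenvalue of the periodic Anderson Hamiltonian iff
`Tr(M̃_N(λ)) = 2`, equivalently iff `1` is an eigenvalue of `M̃_N(λ)`. -/
theorem periodic_eigenvalue_iff_trace_eq_two (N : ℕ) (hN : 3 ≤ N) (V : ℕ → ℝ) (l : ℝ) :
    ((∃ x : Fin N → ℝ, x ≠ 0 ∧ (andersonHper N V).mulVec x = l • x) ↔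
      (transferMtilde V l N).trace = 2) ∧
    ((∃ x : Fin N → ℝ, x ≠ 0 ∧ (andersonHper N V).mulVec x = l • x) ↔
      ∃ z : Fin 2 → ℝ, z ≠ 0 ∧ (transferMtilde V l N).mulVec z = z) := by
  have hfixed := (exists_andersonHper_eigenvector_iff hN V l).trans
    exists_periodic_isAndersonSolution_iff
  exact ⟨hfixed.trans (exists_mulVec_eq_self_iff_trace_eq_two (det_transferMtilde V l N)), hfixed⟩
end

section
/- For every λ ∈ ℝ one has (u_{N+1}(λ), u_N(λ)) ≠ (0, 0). Moreover, any continuous lift of the Prüfer phase is strictly increasing: if θ : ℝ → ℝ is continuous and satisfies cos(θ(λ)) = u_{N+1}(λ)/r_N(λ) and sin(θ(λ)) = u_N(λ)/r_N(λ) for all λ, where r_N(λ) = √(u_{N+1}(λ)² + u_N(λ)²), then θ is strictly increasing on ℝ. -/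
/-- The polynomials `u_k(λ)` defined by `u_0 = 0`, `u_1 = 1`,
`u_{k+1}(λ) = (V_k − λ) u_k(λ) − u_{k−1}(λ)`. -/
noncomputable def andersonU (V : ℕ → ℝ) : ℕ → ℝ → ℝ
  | 0 => fun _ => 0
  | 1 => fun _ => 1
  | (k+2) => fun l => (V (k+1) - l) * andersonU V (k+1) l - andersonU V k l

/-- The Prüfer radius `r_N(λ) = √(u_{N+1}(λ)² + u_N(λ)²)`. -/
noncomputable def prueferR (V : ℕ → ℝ) (N : ℕ) (l : ℝ) : ℝ :=
  Real.sqrt ((andersonU V (N + 1) l) ^ 2 + (andersonU V N l) ^ 2)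

/-!
A continuous lift `θ` of the argument of a nonvanishing differentiable curve `z` satisfies
`θ' = Im (z' / z)`. For `z = u_{N+1} + i u_N` this is the Wronskian `u_{N+1} u_N' - u_{N+1}' u_N`
divided by `r_N ^ 2`. By the recursion the Wronskian grows by `u_{N+1} ^ 2` from `N` to `N + 1`, so
it equals `u_0 ^ 2 + ⋯ + u_N ^ 2`, which is positive as soon as the sum includes `u_1 = 1`.
-/

open Complex Finset Topology

section ContinuousLift

variable {z : ℝ → ℂ} {θ : ℝ → ℝ} {t : ℝ}

lemma arg_div_of_eq_norm_mul_exp {w₁ w₂ : ℂ} {α β : ℝ} (hw₁ : w₁ ≠ 0) (hw₂ : w₂ ≠ 0)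
    (hα : w₁ = ‖w₁‖ * exp (α * I)) (hβ : w₂ = ‖w₂‖ * exp (β * I))
    (hαβ : α - β ∈ Set.Ioc (-Real.pi) Real.pi) : arg (w₁ / w₂) = α - β := by
  have hdiv : w₁ / w₂ = ↑(‖w₁‖ / ‖w₂‖) * exp (↑(α - β) * I) := by
    rw [hα, hβ]
    simp only [norm_mul, norm_real, norm_norm, norm_exp_ofReal_mul_I, mul_one]
    rw [mul_div_mul_comm, ← exp_sub, ofReal_div, ofReal_sub, sub_mul]
  rw [hdiv, exp_mul_I]
  exact arg_mul_cos_add_sin_mul_I (div_pos (norm_pos_iff.2 hw₁) (norm_pos_iff.2 hw₂)) hαβ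

lemma hasDerivAt_of_eq_norm_mul_exp (hz : DifferentiableAt ℝ z t) (hzt : z t ≠ 0)
    (hθ : ContinuousAt θ t) (hlift : ∀ᶠ s in 𝓝 t, z s = ‖z s‖ * exp (θ s * I)) :
    HasDerivAt θ (logDeriv z t).im t := by
  have hlog : HasDerivAt (fun s => log (z s / z t)) (logDeriv z t) t := by
    simpa [hzt, logDeriv] using (hz.hasDerivAt.div_const (z t)).clog_real (by simp [hzt])
  have harg : HasDerivAt (fun s => arg (z s / z t) + θ t) (logDeriv z t).im t := by
    simpa [Function.comp_def, log_im] using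
      (imCLM.hasFDerivAt.comp_hasDerivAt t hlog).add_const (θ t)
  have hnear : ∀ᶠ s in 𝓝 t, θ s - θ t ∈ Set.Ioc (-Real.pi) Real.pi :=
    (hθ.sub_const (θ t)).eventually_mem
      (Ioc_mem_nhds (by simp [Real.pi_pos]) (by simp [Real.pi_pos]))
  refine harg.congr_of_eventuallyEq ?_
  filter_upwards [hlift, hnear, hz.continuousAt.eventually_ne hzt] with s hs hst hzs
  rw [arg_div_of_eq_norm_mul_exp hzs hzt hs hlift.self_of_nhds hst, sub_add_cancel]

lemma strictMono_of_eq_norm_mul_exp (hz : Differentiable ℝ z) (hz0 : ∀ s, z s ≠ 0)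
    (hpos : ∀ s, 0 < (logDeriv z s).im) (hθ : Continuous θ)
    (hlift : ∀ s, z s = ‖z s‖ * exp (θ s * I)) : StrictMono θ :=
  strictMono_of_hasDerivAt_pos
    (fun s => hasDerivAt_of_eq_norm_mul_exp (hz s) (hz0 s) hθ.continuousAt (.of_forall hlift)) hpos

end ContinuousLift

/-- The complex number `z_N(λ) = u_{N+1}(λ) + i u_N(λ)` whose modulus and argument are the Prüfer
radius and phase. -/
noncomputable def prueferZ (V : ℕ → ℝ) (N : ℕ) (l : ℝ) : ℂ :=
  andersonU V (N + 1) l + andersonU V N l * I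

section Pruefer

variable (V : ℕ → ℝ) (N : ℕ) (l : ℝ)

lemma andersonU_add_two (k : ℕ) : andersonU V (k + 2) l =
    (V (k + 1) - l) * andersonU V (k + 1) l - andersonU V k l := by
  simp only [andersonU]

lemma andersonU_pair_ne_zero : (andersonU V (N + 1) l, andersonU V N l) ≠ (0, 0) := by
  induction N with
  | zero => simp [andersonU]
  | succ k ih =>
    intro h
    obtain ⟨hrec, hsucc⟩ := Prod.mk.inj h
    rw [andersonU_add_two, hsucc, mul_zero, zero_sub, neg_eq_zero] at hrec
    exact ih (Prod.ext hsucc hrec)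

lemma differentiable_andersonU : ∀ k, Differentiable ℝ (andersonU V k)
  | 0 => differentiable_const 0
  | 1 => differentiable_const 1
  | k + 2 => ((differentiable_id.const_sub (V (k + 1))).mul (differentiable_andersonU (k + 1))).sub
      (differentiable_andersonU k)

lemma deriv_andersonU_add_two (k : ℕ) : deriv (andersonU V (k + 2)) l =
    (V (k + 1) - l) * deriv (andersonU V (k + 1)) l - andersonU V (k + 1) l
      - deriv (andersonU V k) l := by
  have hmul := ((hasDerivAt_id l).const_sub (V (k + 1))).mul
    (differentiable_andersonU V (k + 1) l).hasDerivAt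
  refine ((hmul.sub (differentiable_andersonU V k l).hasDerivAt).congr_deriv ?_).deriv
  simp only [id_eq]
  ring

lemma andersonU_wronskian_eq_sum_sq :
    andersonU V (N + 1) l * deriv (andersonU V N) l
      - deriv (andersonU V (N + 1)) l * andersonU V N l
      = ∑ k ∈ range (N + 1), andersonU V k l ^ 2 := by
  induction N with
  | zero => simp [andersonU]
  | succ k ih =>
    rw [sum_range_succ, ← ih, deriv_andersonU_add_two, andersonU_add_two]
    ring

lemma prueferZ_ne_zero : prueferZ V N l ≠ 0 := by
  simpa [prueferZ, Complex.ext_iff] using andersonU_pair_ne_zero V N l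

lemma norm_prueferZ : ‖prueferZ V N l‖ = prueferR V N l :=
  norm_add_mul_I _ _

lemma hasDerivAt_prueferZ : HasDerivAt (prueferZ V N)
    (deriv (andersonU V (N + 1)) l + deriv (andersonU V N) l * I) l :=
  (differentiable_andersonU V (N + 1) l).hasDerivAt.ofReal_comp.add
    ((differentiable_andersonU V N l).hasDerivAt.ofReal_comp.mul_const I)

lemma logDeriv_prueferZ_im : (logDeriv (prueferZ V N) l).im =
    (∑ k ∈ range (N + 1), andersonU V k l ^ 2) / prueferR V N l ^ 2 := by
  rw [logDeriv_apply, (hasDerivAt_prueferZ V N l).deriv, div_im, normSq_eq_norm_sq, norm_prueferZ,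
    ← andersonU_wronskian_eq_sum_sq]
  simp only [prueferZ, add_re, add_im, mul_re, mul_im, ofReal_re, ofReal_im, I_re, I_im, mul_zero,
    mul_one, sub_self, add_zero, zero_add]
  ring

variable {V N l}

lemma logDeriv_prueferZ_im_pos (hN : 1 ≤ N) : 0 < (logDeriv (prueferZ V N) l).im := by
  have hsum : 0 < ∑ k ∈ range (N + 1), andersonU V k l ^ 2 :=
    sum_pos' (fun k _ => sq_nonneg _) ⟨1, mem_range.2 (by lia), by simp [andersonU]⟩
  have hR : 0 < prueferR V N l := norm_prueferZ V N l ▸ norm_pos_iff.2 (prueferZ_ne_zero V N l)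
  rw [logDeriv_prueferZ_im]
  positivity

lemma prueferZ_eq_norm_mul_exp {α : ℝ}
    (hcos : Real.cos α = andersonU V (N + 1) l / prueferR V N l)
    (hsin : Real.sin α = andersonU V N l / prueferR V N l) :
    prueferZ V N l = ‖prueferZ V N l‖ * exp (α * I) := by
  have hR : (prueferR V N l : ℂ) ≠ 0 := by
    simpa [← norm_prueferZ] using prueferZ_ne_zero V N l
  rw [norm_prueferZ, exp_mul_I, ← ofReal_cos, ← ofReal_sin, hcos, hsin, prueferZ]
  push_cast
  field_simp

end Pruefer

/-- `(u_{N+1}(λ), u_N(λ)) ≠ (0,0)` for all `λ`, and any continuous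
lift of the Prüfer phase is strictly increasing. -/
theorem prufer_phase_strictMono (N : ℕ) (hN : 1 ≤ N) (V : ℕ → ℝ) :
    (∀ l : ℝ, (andersonU V (N + 1) l, andersonU V N l) ≠ (0, 0)) ∧
    (∀ θ : ℝ → ℝ, Continuous θ →
      (∀ l : ℝ, Real.cos (θ l) = andersonU V (N + 1) l / prueferR V N l ∧
        Real.sin (θ l) = andersonU V N l / prueferR V N l) →
      StrictMono θ) := by
  refine ⟨andersonU_pair_ne_zero V N, fun θ hθ hlift => ?_⟩
  exact strictMono_of_eq_norm_mul_exp
    (fun l => (hasDerivAt_prueferZ V N l).differentiableAt) (prueferZ_ne_zero V N)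
    (fun _ => logDeriv_prueferZ_im_pos hN) hθ
    (fun l => prueferZ_eq_norm_mul_exp (hlift l).1 (hlift l).2)
end

section
/- Coarea-type sampling lemma: let θ : ℝ → ℝ be continuously differentiable with θ′(λ) > 0 for all λ, and let G : ℝ → ℝ be continuous with compact support. Then the set S = {λ ∈ supp G : θ(λ) ∈ π/2 + πℤ} is finite, and Σ_{λ ∈ S} G(λ) = lim_{ε→0⁺} (1/(2ε)) ∫_ℝ G(λ)·θ′(λ)·1[∃ n ∈ ℤ, |θ(λ) − π/2 − πn| < ε] dλ. -/
open Filter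

/-!
The substitution `u = θ l` turns `∫ G |θ′|` over `θ ⁻¹' A` into the integral over `A` of the
extension `H` of `G ∘ θ⁻¹` by zero. As `θ` is an open map and `G` has compact support, `H` is
continuous with compact support. Only finitely many points of a closed discrete set `D` come close
to this support, and for small `ε` the `ε`-thickening of these points is a disjoint union of
intervals of length `2ε`; on each of them the average of `H` tends to its value at the centre.
-/

section

open Function MeasureTheory Metric Set Topology

section Thickening

variable {X : Type*}

lemma eventually_pairwiseDisjoint_ball [MetricSpace X] {F : Set X} (hF : F.Finite) :
    ∀ᶠ ε : ℝ in 𝓝 0, F.PairwiseDisjoint (ball · ε) := by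
  refine (eventually_all_finite hF).2 fun x _ ↦ (eventually_all_finite hF).2 fun y _ ↦
    eventually_imp_distrib_left.2 fun hxy ↦ ?_
  filter_upwards [Iio_mem_nhds (half_pos (dist_pos.2 hxy))] with ε hε
  exact ball_disjoint_ball (by linarith [mem_Iio.1 hε])

lemma notMem_of_mem_thickening_sdiff [PseudoMetricSpace X] {K D : Set X} {ε δ : ℝ} (hεδ : ε ≤ δ)
    {x : X} (hx : x ∈ thickening ε D \ thickening ε (D ∩ thickening δ K)) : x ∉ K := by
  intro hxK
  obtain ⟨d, hdD, hxd⟩ := mem_thickening_iff.1 hx.1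
  have hdK : d ∈ thickening δ K :=
    mem_thickening_iff.2 ⟨x, hxK, (dist_comm d x).trans_lt (hxd.trans_le hεδ)⟩
  exact hx.2 (mem_thickening_iff.2 ⟨d, ⟨hdD, hdK⟩, hxd⟩)

end Thickening

section Average

variable {X E : Type*} [MeasurableSpace X] [NormedAddCommGroup E] [NormedSpace ℝ E]

lemma tendsto_setAverage_ball [PseudoMetricSpace X] [OpensMeasurableSpace X] [CompleteSpace E]
    {μ : Measure X} [IsLocallyFiniteMeasure μ] [μ.IsOpenPosMeasure] {f : X → E} {c : X}
    (hf : ContinuousAt f c) (hfm : StronglyMeasurableAtFilter f (𝓝 c) μ) :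
    Tendsto (fun ε ↦ ⨍ x in ball c ε, f x ∂μ) (𝓝[>] 0) (𝓝 (f c)) := by
  have hball : Tendsto (ball c) (𝓝[>] 0) (𝓝 c).smallSets :=
    tendsto_smallSets_iff.2 fun _ ht ↦ nhdsWithin_le_nhds <|
      (eventually_closedBall_subset ht).mono fun _ ↦ ball_subset_closedBall.trans
  have hpos : ∀ᶠ ε in 𝓝[>] 0, μ.real (ball c ε) ≠ 0 := by
    filter_upwards [hball.eventually (μ.finiteAt_nhds c).eventually, self_mem_nhdsWithin]
      with ε hfin hε
    exact (ENNReal.toReal_pos (measure_ball_pos μ c hε).ne' hfin.ne).ne'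
  have hlim := (hf.integral_sub_linear_isLittleO_ae hfm hball).tendsto_inv_smul_nhds_zero
  rw [← tendsto_sub_nhds_zero_iff]
  refine hlim.congr' ?_
  filter_upwards [hpos] with ε hε
  rw [setAverage_eq, smul_sub, inv_smul_smul₀ hε]

lemma eventually_setIntegral_thickening_eq_sum [MetricSpace X] [OpensMeasurableSpace X]
    {μ : Measure X} {f : X → E} (hf : Integrable f μ) (F : Finset X) :
    ∀ᶠ ε in 𝓝 0, ∫ x in thickening ε F, f x ∂μ = ∑ c ∈ F, ∫ x in ball c ε, f x ∂μ := by
  filter_upwards [eventually_pairwiseDisjoint_ball F.finite_toSet] with ε hε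
  rw [thickening_eq_biUnion_ball]
  exact integral_biUnion_finset F (fun _ _ ↦ measurableSet_ball) hε fun _ _ ↦ hf.integrableOn

lemma tendsto_smul_setIntegral_thickening [CompleteSpace E] {D : Set ℝ} (hD : IsClosed D)
    (hD' : IsDiscrete D) {f : ℝ → E} (hf : Continuous f) (hfs : HasCompactSupport f) :
    Tendsto (fun ε : ℝ ↦ (2 * ε)⁻¹ • ∫ x in thickening ε D, f x) (𝓝[>] 0)
      (𝓝 (∑' d : D, f d)) := by
  have hfin : (D ∩ thickening 1 (support f)).Finite := by
    rw [inter_comm]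
    exact finite_isBounded_inter_isClosed hD'
      (hfs.isCompact.isBounded.subset (subset_tsupport f)).thickening hD
  lift D ∩ thickening 1 (support f) to Finset ℝ using hfin with F hF
  have hsum : ∑' d : D, f d = ∑ c ∈ F, f c := by
    rw [tsum_subtype, tsum_eq_sum (s := F) fun x hx ↦ ?_]
    · exact Finset.sum_congr rfl fun c hc ↦ indicator_of_mem (hF.subset hc).1 f
    · refine indicator_apply_eq_zero.2 fun hxD ↦ notMem_support.1 fun hxf ↦ hx ?_
      exact hF.superset ⟨hxD, self_subset_thickening one_pos _ hxf⟩
  rw [hsum]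
  have hlim : Tendsto (fun ε ↦ ∑ c ∈ F, ⨍ x in ball c ε, f x) (𝓝[>] 0) (𝓝 (∑ c ∈ F, f c)) :=
    tendsto_finsetSum F fun c _ ↦ tendsto_setAverage_ball hf.continuousAt
      (hf.stronglyMeasurableAtFilter _ _)
  refine hlim.congr' ?_
  have hint : Integrable f := hf.integrable_of_hasCompactSupport hfs
  filter_upwards [nhdsWithin_le_nhds (eventually_setIntegral_thickening_eq_sum hint F),
    Ioo_mem_nhdsGT one_pos] with ε hball hε
  have hlocal : ∫ x in thickening ε D, f x = ∫ x in thickening ε F, f x := by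
    refine setIntegral_eq_of_subset_of_forall_sdiff_eq_zero isOpen_thickening.measurableSet
      (thickening_subset_of_subset ε (hF ▸ inter_subset_left)) fun x hx ↦ ?_
    exact notMem_support.1 (notMem_of_mem_thickening_sdiff hε.2.le (hF ▸ hx))
  simp only [hlocal, hball, Finset.smul_sum, setAverage_eq, Real.volume_real_ball hε.1.le]

end Average

section Extend

lemma isOpenMap_of_continuous_of_injective {α β : Type*} [ConditionallyCompleteLinearOrder α]
    [TopologicalSpace α] [OrderTopology α] [DenselyOrdered α] [NoMinOrder α] [NoMaxOrder α]
    [LinearOrder β] [TopologicalSpace β] [OrderTopology β] {f : α → β} (hf : Continuous f)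
    (hinj : Injective f) : IsOpenMap f := by
  refine isOpenMap_iff_nhds_le.2 fun x ↦ ((nhds_basis_Ioo x).map f).ge_iff.2 ?_
  rintro ⟨a, b⟩ ⟨ha, hb⟩
  rcases hf.strictMono_of_inj hinj with hmono | hanti
  · exact mem_of_superset (Ioo_mem_nhds (hmono ha) (hmono hb))
      (intermediate_value_Ioo (ha.trans hb).le hf.continuousOn)
  · exact mem_of_superset (Ioo_mem_nhds (hanti hb) (hanti ha))
      (intermediate_value_Ioo' (ha.trans hb).le hf.continuousOn)

lemma continuous_extend_zero_of_isOpenEmbedding {X Y M : Type*} [TopologicalSpace X]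
    [TopologicalSpace Y] [T2Space Y] [TopologicalSpace M] [Zero M] {e : X → Y}
    (he : IsOpenEmbedding e) {f : X → M} (hf : Continuous f) (hfs : HasCompactSupport f) :
    Continuous (extend e f 0) := by
  refine continuous_of_tsupport fun y hy ↦ ?_
  rw [hfs.tsupport_extend_zero he.continuous he.injective] at hy
  obtain ⟨x, -, rfl⟩ := hy
  rw [← he.continuousAt_iff, extend_comp he.injective]
  exact hf.continuousAt

lemma extend_zero_indicator_preimage {α β M : Type*} [Zero M] {e : α → β} (he : Injective e)
    (f : α → M) (s : Set β) :
    extend e ((e ⁻¹' s).indicator f) 0 = s.indicator (extend e f 0) := by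
  classical
  ext b
  by_cases hb : b ∈ range e
  · obtain ⟨a, rfl⟩ := hb
    simp only [he.extend_apply, indicator_apply, mem_preimage]
  · simp [extend_apply' _ _ _ hb, indicator_apply]

lemma tsum_support_inter_preimage {α β M : Type*} [AddCommMonoid M] [TopologicalSpace M]
    {e : α → β} (he : Injective e) (f : α → M) (s : Set β) :
    ∑' a : ↥(support f ∩ e ⁻¹' s), f a = ∑' b : s, extend e f 0 b := by
  rw [tsum_subtype, tsum_subtype, inter_comm, indicator_inter_support,
    ← extend_zero_indicator_preimage he, tsum_extend_zero he]

lemma setIntegral_preimage_abs_deriv_smul {E : Type*} [NormedAddCommGroup E] [NormedSpace ℝ E]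
    {θ θ' : ℝ → ℝ} (hθ : ∀ l, HasDerivAt θ (θ' l) l) (hinj : Injective θ) (f : ℝ → E)
    {s : Set ℝ} (hs : MeasurableSet s) :
    ∫ l in θ ⁻¹' s, |θ' l| • f l = ∫ u in s, extend θ f 0 u := by
  have hcont : Continuous θ := continuous_iff_continuousAt.2 fun l ↦ (hθ l).continuousAt
  have hsubst := integral_image_eq_integral_abs_deriv_smul (hcont.measurable hs)
    (fun l _ ↦ (hθ l).hasDerivWithinAt) hinj.injOn (extend θ f 0)
  simp only [hinj.extend_apply] at hsubst
  rw [← hsubst, setIntegral_eq_of_subset_of_forall_sdiff_eq_zero hs (image_preimage_subset θ s)]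
  rintro u ⟨hus, hu⟩
  refine extend_apply' _ _ _ ?_
  rintro ⟨l, rfl⟩
  exact hu (mem_image_of_mem θ hus)

end Extend

theorem coarea_sampling_general {E : Type*} [NormedAddCommGroup E] [NormedSpace ℝ E]
    [CompleteSpace E] {θ θ' : ℝ → ℝ} (hθ : ∀ l, HasDerivAt θ (θ' l) l) (hinj : Injective θ)
    {D : Set ℝ} (hD : IsClosed D) (hD' : IsDiscrete D) {G : ℝ → E} (hG : Continuous G)
    (hGsupp : HasCompactSupport G) :
    (support G ∩ θ ⁻¹' D).Finite ∧
    Tendsto (fun ε : ℝ ↦ (2 * ε)⁻¹ • ∫ l in θ ⁻¹' thickening ε D, |θ' l| • G l) (𝓝[>] 0)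
      (𝓝 (∑' l : ↥(support G ∩ θ ⁻¹' D), G l)) := by
  have hcont : Continuous θ := continuous_iff_continuousAt.2 fun l ↦ (hθ l).continuousAt
  have hopen : IsOpenEmbedding θ := .of_continuous_injective_isOpenMap hcont hinj
    (isOpenMap_of_continuous_of_injective hcont hinj)
  constructor
  · exact finite_isBounded_inter_isClosed (hD'.preimage hcont.continuousOn hinj)
      (hGsupp.isCompact.isBounded.subset (subset_tsupport G)) (hD.preimage hcont)
  · simp only [tsum_support_inter_preimage hinj,
      setIntegral_preimage_abs_deriv_smul hθ hinj G isOpen_thickening.measurableSet]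
    exact tendsto_smul_setIntegral_thickening hD hD'
      (continuous_extend_zero_of_isOpenEmbedding hopen hG hGsupp) (hGsupp.extend_zero hcont)

section HalfPiCoset

/-- The coset `π/2 + πℤ` of `πℤ` in `ℝ`, i.e. the zero set of the cosine: the set of values of
`θ` at which the sampling takes place. -/
def halfPiCoset : Set ℝ := {x | ∃ n : ℤ, x = Real.pi / 2 + Real.pi * n}

lemma halfPiCoset_eq_range :
    halfPiCoset = range fun n : ℤ ↦ Real.pi / 2 + Real.pi * (n : ℝ) := by
  ext x
  exact exists_congr fun n ↦ eq_comm

lemma isClosedEmbedding_pi_div_two_add_pi_mul_intCast :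
    IsClosedEmbedding fun n : ℤ ↦ Real.pi / 2 + Real.pi * (n : ℝ) :=
  ((Homeomorph.addLeft (Real.pi / 2)).isClosedEmbedding.comp
    (Homeomorph.mulLeft₀ Real.pi Real.pi_ne_zero).isClosedEmbedding).comp
    Int.isClosedEmbedding_coe_real

lemma isClosed_halfPiCoset : IsClosed halfPiCoset :=
  halfPiCoset_eq_range ▸ isClosedEmbedding_pi_div_two_add_pi_mul_intCast.isClosed_range

lemma isDiscrete_halfPiCoset : IsDiscrete halfPiCoset :=
  halfPiCoset_eq_range ▸ isClosedEmbedding_pi_div_two_add_pi_mul_intCast.isInducing.isDiscrete_range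

lemma mem_thickening_halfPiCoset {ε x : ℝ} :
    x ∈ thickening ε halfPiCoset ↔ ∃ n : ℤ, |x - Real.pi / 2 - Real.pi * n| < ε := by
  simp only [mem_thickening_iff, halfPiCoset_eq_range, exists_range_iff, Real.dist_eq, sub_sub]

lemma integral_mul_indicator_eq_setIntegral_preimage_thickening {θ θ' : ℝ → ℝ}
    (hθ : Measurable θ) (hθ' : ∀ l, 0 ≤ θ' l) (G : ℝ → ℝ) (ε : ℝ) :
    ∫ l, G l * θ' l * {l | ∃ n : ℤ, |θ l - Real.pi / 2 - Real.pi * n| < ε}.indicator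
        (fun _ ↦ (1 : ℝ)) l =
      ∫ l in θ ⁻¹' thickening ε halfPiCoset, |θ' l| • G l := by
  rw [← integral_indicator (hθ isOpen_thickening.measurableSet)]
  classical
  congr with l
  simp only [indicator_apply, mem_preimage, mem_thickening_halfPiCoset, mem_ofPred_eq, mul_ite,
    mul_one, mul_zero, abs_of_nonneg (hθ' l), smul_eq_mul, mul_comm (G l)]

end HalfPiCoset

end

/-- coarea-type sampling lemma. If `θ` is `C¹` with `θ′ > 0` and `G` is
continuous with compact support, then `S = {λ ∈ supp G : θ(λ) ∈ π/2 + πℤ}` is finite and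
`Σ_{λ∈S} G(λ) = lim_{ε→0⁺} (1/(2ε)) ∫ G(λ) θ′(λ) 1[dist(θ(λ), π/2 + πℤ) < ε] dλ`. -/
theorem coarea_sampling (θ : ℝ → ℝ) (hθ : ContDiff ℝ 1 θ) (hθ' : ∀ l, 0 < deriv θ l)
    (G : ℝ → ℝ) (hG : Continuous G) (hGsupp : HasCompactSupport G) :
    {l : ℝ | l ∈ Function.support G ∧ ∃ n : ℤ, θ l = Real.pi / 2 + Real.pi * n}.Finite ∧
    Tendsto
      (fun ε : ℝ => (1 / (2 * ε)) * ∫ l : ℝ,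
        G l * deriv θ l *
          Set.indicator {l : ℝ | ∃ n : ℤ, |θ l - Real.pi / 2 - Real.pi * n| < ε}
            (fun _ => (1 : ℝ)) l)
      (nhdsWithin 0 (Set.Ioi 0))
      (nhds (∑' l : {l : ℝ | l ∈ Function.support G ∧
          ∃ n : ℤ, θ l = Real.pi / 2 + Real.pi * n}, G l)) := by
  simp only [one_div, integral_mul_indicator_eq_setIntegral_preimage_thickening
    hθ.continuous.measurable fun l ↦ (hθ' l).le]
  exact coarea_sampling_general (fun l ↦ (hθ.differentiable one_ne_zero l).hasDerivAt)
    (strictMono_of_deriv_pos hθ').injective isClosed_halfPiCoset isDiscrete_halfPiCoset hG hGsupp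
end
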